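/- Fix a positive integer k and let λ, μ, ν ∈ [0,k] satisfy the strict inequalities |λ−μ| < ν < min(λ+μ, 2k−λ−μ). Let θ ∈ [0, π/2] be such that sin²θ = ( cos(πν/k) − cos(π(λ+μ)/k) ) / ( 2 sin(πλ/k) sin(πμ/k) ) and set a = e^{iθσ₂}. Then the map from SU(2) to T_{λ,μ}^ν sending h to ( h t_λ h⁻¹, (h·a) t_μ (h·a)⁻¹ ) is surjective, and for all h, h' ∈ SU(2) it takes the same value at h and h' if and only if h' = h or h' = −h. -/

import Mathlib

open Matrix Complex Real

noncomputable section

/-- `SU(2)`: 2×2 complex unitary matrices with determinant 1. -/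
def SU2 : Set (Matrix (Fin 2) (Fin 2) ℂ) :=
  {g | g ∈ Matrix.unitaryGroup (Fin 2) ℂ ∧ g.det = 1}

/-- The diagonal matrix `t_λ = diag(exp(iπλ/k), exp(−iπλ/k))`. -/
def tmat (k : ℕ) (l : ℝ) : Matrix (Fin 2) (Fin 2) ℂ :=
  Matrix.diagonal ![Complex.exp (Complex.I * ((Real.pi * l / k : ℝ) : ℂ)),
    Complex.exp (-(Complex.I * ((Real.pi * l / k : ℝ) : ℂ)))]

/-- The conjugacy class `C_λ` of `t_λ` in `SU(2)`. -/
def conjClass (k : ℕ) (l : ℝ) : Set (Matrix (Fin 2) (Fin 2) ℂ) :=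
  {g | ∃ x ∈ SU2, g = x * tmat k l * x⁻¹}

/-- `T_{λ,μ}^ν = {(g,h) : g ∈ C_λ, h ∈ C_μ, g·h ∈ C_ν}`. -/
def Tset (k : ℕ) (l m n : ℝ) :
    Set (Matrix (Fin 2) (Fin 2) ℂ × Matrix (Fin 2) (Fin 2) ℂ) :=
  {p | p.1 ∈ conjClass k l ∧ p.2 ∈ conjClass k m ∧ p.1 * p.2 ∈ conjClass k n}

/-- The rotation matrix `e^{iθσ₂} = [[cos θ, sin θ],[−sin θ, cos θ]]`. -/
def rotY (θ : ℝ) : Matrix (Fin 2) (Fin 2) ℂ :=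
  !![((Real.cos θ : ℝ) : ℂ), ((Real.sin θ : ℝ) : ℂ);
     ((-(Real.sin θ) : ℝ) : ℂ), ((Real.cos θ : ℝ) : ℂ)]


/-- The matrix `[[p, q], [-q̄, p̄]]`; those with `|p|² + |q|² = 1` make up `SU(2)`. -/
def suMat (p q : ℂ) : Matrix (Fin 2) (Fin 2) ℂ :=
  !![p, q; -(starRingEnd ℂ) q, (starRingEnd ℂ) p]

theorem suMat_mul (p q r s : ℂ) : suMat p q * suMat r s =
    suMat (p * r - q * (starRingEnd ℂ) s) (p * s + q * (starRingEnd ℂ) r) := by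
  ext i j
  fin_cases i <;> fin_cases j <;> simp [suMat, Matrix.mul_apply, Fin.sum_univ_two] <;> ring

theorem suMat_inj {p q r s : ℂ} : suMat p q = suMat r s ↔ p = r ∧ q = s := by
  refine ⟨fun h => ⟨?_, ?_⟩, fun h => by rw [h.1, h.2]⟩
  · simpa [suMat] using congrFun (congrFun h 0) 0
  · simpa [suMat] using congrFun (congrFun h 0) 1

theorem suMat_one : suMat 1 0 = 1 := by
  ext i j
  fin_cases i <;> fin_cases j <;> simp [suMat]

theorem suMat_neg (p q : ℂ) : -suMat p q = suMat (-p) (-q) := by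
  ext i j
  fin_cases i <;> fin_cases j <;> simp [suMat]

theorem suMat_mul_conj {p q : ℂ} (h : normSq p + normSq q = 1) :
    suMat p q * suMat ((starRingEnd ℂ) p) (-q) = 1 := by
  rw [suMat_mul, ← suMat_one, suMat_inj]
  refine ⟨?_, by simp; ring⟩
  rw [map_neg, mul_neg, sub_neg_eq_add, mul_conj, mul_conj]
  exact_mod_cast h

theorem suMat_inv {p q : ℂ} (h : normSq p + normSq q = 1) :
    (suMat p q)⁻¹ = suMat ((starRingEnd ℂ) p) (-q) :=
  Matrix.inv_eq_right_inv (suMat_mul_conj h)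

theorem suMat_mem {p q : ℂ} (h : normSq p + normSq q = 1) : suMat p q ∈ SU2 := by
  refine ⟨?_, ?_⟩
  · have hs : star (suMat p q) = suMat ((starRingEnd ℂ) p) (-q) := by
      ext i j
      fin_cases i <;> fin_cases j <;> simp [suMat, Matrix.star_apply]
    rw [Matrix.mem_unitaryGroup_iff, hs, suMat_mul_conj h]
  · rw [suMat, Matrix.det_fin_two_of, mul_conj, mul_neg, mul_conj, sub_neg_eq_add]
    exact_mod_cast h

theorem exists_suMat_of_mem {g : Matrix (Fin 2) (Fin 2) ℂ} (hg : g ∈ SU2) :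
    ∃ p q : ℂ, normSq p + normSq q = 1 ∧ g = suMat p q := by
  obtain ⟨hu, hd⟩ := hg
  have hadj : star g = g.adjugate := by
    have h1 : star g * g = 1 := Matrix.mem_unitaryGroup_iff'.mp hu
    have h2 : g * g.adjugate = 1 := by rw [Matrix.mul_adjugate, hd, one_smul]
    calc star g = star g * (g * g.adjugate) := by rw [h2, mul_one]
      _ = g.adjugate := by rw [← mul_assoc, h1, one_mul]
  have e00 := congrFun (congrFun hadj 0) 0
  have e10 := congrFun (congrFun hadj 1) 0
  have e01 := congrFun (congrFun hadj 0) 1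
  simp only [Matrix.star_apply, Matrix.adjugate_fin_two, Matrix.of_apply, Matrix.cons_val',
    Matrix.cons_val_zero, Matrix.cons_val_one, Matrix.cons_val_fin_one, RCLike.star_def]
    at e00 e10 e01
  have hgs : g = suMat (g 0 0) (g 0 1) := by
    ext i j
    fin_cases i <;> fin_cases j <;> simp [suMat, e00, e10]
  refine ⟨g 0 0, g 0 1, ?_, hgs⟩
  rw [hgs, suMat, Matrix.det_fin_two_of, mul_conj, mul_neg, mul_conj, sub_neg_eq_add] at hd
  exact_mod_cast hd

theorem SU2_mul_mem {g h : Matrix (Fin 2) (Fin 2) ℂ} (hg : g ∈ SU2) (hh : h ∈ SU2) :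
    g * h ∈ SU2 :=
  ⟨mul_mem hg.1 hh.1, by rw [Matrix.det_mul, hg.2, hh.2, one_mul]⟩

theorem SU2_inv_mem {g : Matrix (Fin 2) (Fin 2) ℂ} (hg : g ∈ SU2) : g⁻¹ ∈ SU2 := by
  obtain ⟨p, q, h, rfl⟩ := exists_suMat_of_mem hg
  rw [suMat_inv h]
  exact suMat_mem (by simpa using h)

theorem SU2_isUnit_det {g : Matrix (Fin 2) (Fin 2) ℂ} (hg : g ∈ SU2) : IsUnit g.det := by
  rw [hg.2]; exact isUnit_one

theorem tmat_eq (k : ℕ) (l : ℝ) : tmat k l =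
    suMat ⟨Real.cos (Real.pi * l / k), Real.sin (Real.pi * l / k)⟩ 0 := by
  have h : Complex.exp (Complex.I * ((Real.pi * l / k : ℝ) : ℂ)) =
      ⟨Real.cos (Real.pi * l / k), Real.sin (Real.pi * l / k)⟩ := by
    rw [mul_comm, Complex.exp_mul_I, ← Complex.ofReal_cos, ← Complex.ofReal_sin]
    apply Complex.ext <;> simp [-Complex.ofReal_cos, -Complex.ofReal_sin]
  have h' : Complex.exp (-(Complex.I * ((Real.pi * l / k : ℝ) : ℂ))) =
      ⟨Real.cos (Real.pi * l / k), -Real.sin (Real.pi * l / k)⟩ := by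
    rw [mul_comm, ← neg_mul, Complex.exp_mul_I, Complex.cos_neg, Complex.sin_neg,
      ← Complex.ofReal_cos, ← Complex.ofReal_sin]
    apply Complex.ext <;> simp [-Complex.ofReal_cos, -Complex.ofReal_sin]
  rw [tmat, h, h']
  ext i j
  fin_cases i <;> fin_cases j <;> simp [suMat, Complex.ext_iff]

theorem tmat_mem (k : ℕ) (l : ℝ) : tmat k l ∈ SU2 := by
  rw [tmat_eq]
  exact suMat_mem (by simp [normSq_mk, ← sq])

theorem rotY_eq (θ : ℝ) : rotY θ = suMat (Real.cos θ : ℝ) (Real.sin θ : ℝ) := by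
  ext i j
  fin_cases i <;> fin_cases j <;> simp [suMat, rotY, -Complex.ofReal_cos, -Complex.ofReal_sin]

theorem rotY_mem (θ : ℝ) : rotY θ ∈ SU2 := by
  rw [rotY_eq]
  exact suMat_mem (by simp [normSq_ofReal, ← sq, -Complex.ofReal_cos, -Complex.ofReal_sin])

theorem trace_suMat (p q : ℂ) : (suMat p q).trace = (2 * p.re : ℝ) := by
  rw [suMat, Matrix.trace_fin_two_of, Complex.add_conj]

theorem trace_conj {x : Matrix (Fin 2) (Fin 2) ℂ} (hx : x ∈ SU2)
    (g : Matrix (Fin 2) (Fin 2) ℂ) : (x * g * x⁻¹).trace = g.trace := by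
  rw [Matrix.trace_mul_comm, ← mul_assoc, Matrix.nonsing_inv_mul _ (SU2_isUnit_det hx), one_mul]

theorem conj_mem_SU2 {x g : Matrix (Fin 2) (Fin 2) ℂ} (hx : x ∈ SU2) (hg : g ∈ SU2) :
    x * g * x⁻¹ ∈ SU2 :=
  SU2_mul_mem (SU2_mul_mem hx hg) (SU2_inv_mem hx)

/-- An element of `SU(2)` with the trace of `t_n` is conjugate to `t_n`. -/
theorem mem_conjClass_of_trace {k : ℕ} {n : ℝ} (hs : 0 < Real.sin (Real.pi * n / k))
    {g : Matrix (Fin 2) (Fin 2) ℂ} (hg : g ∈ SU2)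
    (ht : g.trace = (2 * Real.cos (Real.pi * n / k) : ℝ)) : g ∈ conjClass k n := by
  obtain ⟨p, q, hpq, rfl⟩ := exists_suMat_of_mem hg
  rw [trace_suMat, Complex.ofReal_inj] at ht
  have hcs := Real.sin_sq_add_cos_sq (Real.pi * n / k)
  simp only [conjClass, Set.mem_ofPred_eq, tmat_eq]
  set S := Real.sin (Real.pi * n / k)
  set C := Real.cos (Real.pi * n / k)
  obtain ⟨a, b⟩ := p
  obtain ⟨u, v⟩ := q
  simp only [normSq_mk] at hpq
  obtain rfl : a = C := by simpa using ht
  have hkey : b ^ 2 + u ^ 2 + v ^ 2 = S ^ 2 := by linarith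
  rcases (abs_le_of_sq_le_sq' (show b ^ 2 ≤ S ^ 2 by nlinarith) hs.le).1.eq_or_lt with hb | hb
  · have hn : normSq 0 + normSq 1 = 1 := by simp
    have huv : u = 0 ∧ v = 0 := by
      rw [← hb] at hkey
      constructor <;> nlinarith
    refine ⟨suMat 0 1, suMat_mem hn, ?_⟩
    rw [suMat_inv hn, suMat_mul, suMat_mul, suMat_inj, huv.1, huv.2, ← hb]
    constructor <;> apply Complex.ext <;> simp
  · have hpos : 0 < 2 * S * (S + b) := by nlinarith
    obtain ⟨N, hN, hN2⟩ : ∃ N : ℝ, 0 < N ∧ N ^ 2 = 2 * S * (S + b) :=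
      ⟨√(2 * S * (S + b)), Real.sqrt_pos.mpr hpos, Real.sq_sqrt hpos.le⟩
    have hn : normSq (⟨(S + b) / N, 0⟩ : ℂ) + normSq ⟨-v / N, u / N⟩ = 1 := by
      simp only [normSq_mk]
      field_simp
      nlinarith
    refine ⟨suMat ⟨(S + b) / N, 0⟩ ⟨-v / N, u / N⟩, suMat_mem hn, ?_⟩
    rw [suMat_inv hn, suMat_mul, suMat_mul, suMat_inj]
    constructor <;> apply Complex.ext <;> simp <;> field_simp <;> rw [hN2]
    · linear_combination -C * hkey
    · linear_combination S * hkey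
    · ring
    · ring

theorem conj_eq_conj_mul_iff {x w t : Matrix (Fin 2) (Fin 2) ℂ} (hx : x ∈ SU2) (hw : w ∈ SU2) :
    x * t * x⁻¹ = (x * w) * t * (x * w)⁻¹ ↔ w * t = t * w := by
  have hxi : x⁻¹ * x = 1 := Matrix.nonsing_inv_mul _ (SU2_isUnit_det hx)
  have hwi : w⁻¹ * w = 1 := Matrix.nonsing_inv_mul _ (SU2_isUnit_det hw)
  have hwi' : w * w⁻¹ = 1 := Matrix.mul_nonsing_inv _ (SU2_isUnit_det hw)
  rw [Matrix.mul_inv_rev]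
  constructor <;> intro h
  · calc w * t = (x⁻¹ * x) * w * t * (w⁻¹ * (x⁻¹ * x) * w) := by simp [hxi, hwi]
      _ = x⁻¹ * (x * w * t * (w⁻¹ * x⁻¹)) * x * w := by simp only [mul_assoc]
      _ = (x⁻¹ * x) * t * (x⁻¹ * x) * w := by rw [← h]; simp only [mul_assoc]
      _ = t * w := by simp [hxi]
  · calc x * t * x⁻¹ = x * t * (w * w⁻¹) * x⁻¹ := by simp [hwi']
      _ = x * (t * w) * (w⁻¹ * x⁻¹) := by simp only [mul_assoc]
      _ = x * w * t * (w⁻¹ * x⁻¹) := by rw [← h]; simp only [mul_assoc]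

theorem suMat_mul_tmat_comm (k : ℕ) (l : ℝ) (e : ℂ) :
    suMat e 0 * tmat k l = tmat k l * suMat e 0 := by
  rw [tmat_eq, suMat_mul, suMat_mul, suMat_inj]
  simp [mul_comm]

theorem eq_zero_of_suMat_mul_tmat_comm {k : ℕ} {l : ℝ} (hs : Real.sin (Real.pi * l / k) ≠ 0)
    {p q : ℂ} (h : suMat p q * tmat k l = tmat k l * suMat p q) : q = 0 := by
  rw [tmat_eq, suMat_mul, suMat_mul, suMat_inj] at h
  have h2 := h.2
  simp only [mul_zero, zero_add, zero_mul, add_zero] at h2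
  have hre := congrArg re h2
  have him := congrArg im h2
  simp only [mul_re, mul_im, conj_re, conj_im] at hre him
  apply Complex.ext
  · have : Real.sin (Real.pi * l / k) * q.re = 0 := by linarith
    simpa [hs] using this
  · have : Real.sin (Real.pi * l / k) * q.im = 0 := by linarith
    simpa [hs] using this

theorem trace_conj_mul_conj {x z : Matrix (Fin 2) (Fin 2) ℂ} (hx : x ∈ SU2)
    (s t : Matrix (Fin 2) (Fin 2) ℂ) :
    (x * s * x⁻¹ * ((x * z) * t * (x * z)⁻¹)).trace = (s * (z * t * z⁻¹)).trace := by
  rw [← trace_conj hx (s * (z * t * z⁻¹)), Matrix.mul_inv_rev]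
  congr 1
  calc x * s * x⁻¹ * (x * z * t * (z⁻¹ * x⁻¹))
      = x * s * (x⁻¹ * x) * (z * t * (z⁻¹ * x⁻¹)) := by simp only [mul_assoc]
    _ = x * (s * (z * t * z⁻¹)) * x⁻¹ := by
      rw [Matrix.nonsing_inv_mul _ (SU2_isUnit_det hx)]; simp only [mul_assoc, one_mul]

theorem trace_tmat_mul_conj (k : ℕ) (l m : ℝ) {p q : ℂ} (h : normSq p + normSq q = 1) :
    (tmat k l * (suMat p q * tmat k m * (suMat p q)⁻¹)).trace =
      (2 * (Real.cos (Real.pi * l / k) * Real.cos (Real.pi * m / k) -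
        Real.sin (Real.pi * l / k) * Real.sin (Real.pi * m / k) * (1 - 2 * normSq q)) : ℝ) := by
  rw [suMat_inv h, tmat_eq, tmat_eq, suMat_mul, suMat_mul, suMat_mul, trace_suMat,
    Complex.ofReal_inj]
  simp only [normSq_apply] at h ⊢
  simp
  linear_combination (Real.cos (Real.pi * l / k) * Real.cos (Real.pi * m / k) -
    Real.sin (Real.pi * l / k) * Real.sin (Real.pi * m / k)) * h

/-- An element of `SU(2)` is determined by the moduli of its entries up to multiplication by
diagonal elements on both sides. -/
theorem exists_suMat_eq_diag_mul_diag {p q : ℂ} {c s : ℝ} (hc : c ≠ 0) (hs : s ≠ 0)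
    (hp : normSq p = c ^ 2) (hq : normSq q = s ^ 2) :
    ∃ e f : ℂ, normSq e = 1 ∧ normSq f = 1 ∧
      suMat p q = suMat e 0 * suMat c s * suMat f 0 := by
  have hcC : (c : ℂ) ≠ 0 := by exact_mod_cast hc
  have hsC : (s : ℂ) ≠ 0 := by exact_mod_cast hs
  have hu : normSq (p / c) = 1 := by
    rw [normSq_div, hp, normSq_ofReal, ← sq, div_self (pow_ne_zero 2 hc)]
  have hv : normSq (q / s) = 1 := by
    rw [normSq_div, hq, normSq_ofReal, ← sq, div_self (pow_ne_zero 2 hs)]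
  obtain ⟨e, he⟩ := IsAlgClosed.exists_pow_nat_eq (p / c * (q / s)) (n := 2) two_pos
  have hne : normSq e = 1 := by
    have h2 : normSq e ^ 2 = 1 := by rw [← map_pow, he, map_mul, hu, hv, one_mul]
    exact (pow_eq_one_iff_of_nonneg (normSq_nonneg e) two_ne_zero).mp h2
  have hee : e * (starRingEnd ℂ) e = 1 := by rw [mul_conj, hne, ofReal_one]
  have huu : p / c * (starRingEnd ℂ) (p / c) = 1 := by rw [mul_conj, hu, ofReal_one]
  refine ⟨e, p / c * (starRingEnd ℂ) e, hne, by rw [map_mul, hu, normSq_conj, hne, one_mul], ?_⟩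
  rw [suMat_mul, suMat_mul, suMat_inj]
  have hpc : p = c * (p / c) := by field_simp
  have hqs : q = s * (q / s) := by field_simp
  simp only [map_zero, map_mul, conj_conj, mul_zero, zero_mul, sub_zero, zero_add, add_zero]
  constructor
  · linear_combination hpc - c * (p / c) * hee
  · linear_combination hqs - s * (q / s) * huu - s * (starRingEnd ℂ) (p / c) * he

theorem cos_add_lt_cos {α β γ : ℝ} (hγ : 0 < γ) (h : γ < α + β)
    (h' : γ < 2 * Real.pi - α - β) : Real.cos (α + β) < Real.cos γ := by
  have h1 : 0 < Real.sin ((γ + (α + β)) / 2) :=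
    Real.sin_pos_of_pos_of_lt_pi (by linarith) (by linarith)
  have h2 : 0 < Real.sin (-((γ - (α + β)) / 2)) :=
    Real.sin_pos_of_pos_of_lt_pi (by linarith) (by linarith)
  rw [Real.sin_neg] at h2
  have := Real.cos_sub_cos γ (α + β)
  nlinarith

theorem cos_lt_cos_sub {α β γ : ℝ} (h : |α - β| < γ) (hπ : γ < Real.pi) :
    Real.cos γ < Real.cos (α - β) := by
  rw [← Real.cos_abs (α - β)]
  exact Real.cos_lt_cos_of_nonneg_of_le_pi (abs_nonneg _) hπ.le h

theorem stmt19 (k : ℕ) (hk : 0 < k) (lam mu nu : ℝ)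
    (hlam : lam ∈ Set.Icc (0:ℝ) k) (hmu : mu ∈ Set.Icc (0:ℝ) k)
    (hnu : nu ∈ Set.Icc (0:ℝ) k)
    (h1 : |lam - mu| < nu) (h2 : nu < min (lam + mu) (2 * k - lam - mu))
    (θ : ℝ) (hθ : θ ∈ Set.Icc (0:ℝ) (Real.pi / 2))
    (hsin : (Real.sin θ) ^ 2 =
      (Real.cos (Real.pi * nu / k) - Real.cos (Real.pi * (lam + mu) / k)) /
        (2 * Real.sin (Real.pi * lam / k) * Real.sin (Real.pi * mu / k))) :
    (∀ h ∈ SU2,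
        (h * tmat k lam * h⁻¹, (h * rotY θ) * tmat k mu * (h * rotY θ)⁻¹) ∈
          Tset k lam mu nu) ∧
      (∀ p ∈ Tset k lam mu nu, ∃ h ∈ SU2,
        p = (h * tmat k lam * h⁻¹, (h * rotY θ) * tmat k mu * (h * rotY θ)⁻¹)) ∧
      (∀ h ∈ SU2, ∀ h' ∈ SU2,
        ((h * tmat k lam * h⁻¹, (h * rotY θ) * tmat k mu * (h * rotY θ)⁻¹) =
          (h' * tmat k lam * h'⁻¹, (h' * rotY θ) * tmat k mu * (h' * rotY θ)⁻¹) ↔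
          h' = h ∨ h' = -h)) := by
  have hk0 : (0 : ℝ) < k := by exact_mod_cast hk
  have hπ := Real.pi_pos
  obtain ⟨h1a, h1b⟩ := abs_lt.mp h1
  obtain ⟨h2a, h2b⟩ := lt_min_iff.mp h2
  have hscale : ∀ {x y : ℝ}, x < y → Real.pi * x / k < Real.pi * y / k := fun h => by gcongr
  have hkk : Real.pi * k / k = Real.pi := by field_simp
  have hsin_pos : ∀ {x : ℝ}, 0 < x → x < k → 0 < Real.sin (Real.pi * x / k) := fun h0 hk' =>
    Real.sin_pos_of_pos_of_lt_pi (by positivity) (by simpa [hkk] using hscale hk')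
  have hsl := hsin_pos (x := lam) (by linarith) (by linarith)
  have hsm := hsin_pos (x := mu) (by linarith) (by linarith)
  have hsn := hsin_pos (x := nu) (by linarith) (by linarith)
  have hadd : Real.pi * (lam + mu) / k = Real.pi * lam / k + Real.pi * mu / k := by ring
  have hsub : Real.pi * (lam - mu) / k = Real.pi * lam / k - Real.pi * mu / k := by ring
  have hlt1 : Real.cos (Real.pi * lam / k + Real.pi * mu / k) < Real.cos (Real.pi * nu / k) := by
    refine cos_add_lt_cos ?_ ?_ ?_
    · have : 0 < nu := by linarith
      positivity
    · rw [← hadd]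
      exact hscale h2a
    · convert hscale h2b using 1
      field_simp
  have hlt2 : Real.cos (Real.pi * nu / k) < Real.cos (Real.pi * lam / k - Real.pi * mu / k) := by
    refine cos_lt_cos_sub (abs_lt.mpr ⟨?_, ?_⟩) ?_
    · rw [← hsub, show -(Real.pi * nu / k) = Real.pi * -nu / k by ring]
      exact hscale h1a
    · rw [← hsub]
      exact hscale h1b
    · simpa [hkk] using hscale (show nu < k by linarith)
  rw [hadd, Real.cos_add, eq_div_iff (by positivity)] at hsin
  rw [Real.cos_add] at hlt1
  rw [Real.cos_sub] at hlt2
  have hcs := Real.sin_sq_add_cos_sq θ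
  have hs0 : Real.sin θ ≠ 0 := fun h => by
    rw [h] at hsin
    linarith
  have hc0 : Real.cos θ ≠ 0 := fun h => by
    have : Real.sin θ ^ 2 = 1 := by rw [h] at hcs; linarith
    rw [this] at hsin
    linarith
  have ha := rotY_mem θ
  refine ⟨fun h hh => ⟨⟨h, hh, rfl⟩, ⟨h * rotY θ, SU2_mul_mem hh ha, rfl⟩, ?_⟩, ?_, ?_⟩
  · refine mem_conjClass_of_trace hsn (SU2_mul_mem (conj_mem_SU2 hh (tmat_mem k lam))
      (conj_mem_SU2 (SU2_mul_mem hh ha) (tmat_mem k mu))) ?_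
    rw [trace_conj_mul_conj hh, rotY_eq, trace_tmat_mul_conj, Complex.ofReal_inj, normSq_ofReal]
    · linear_combination 2 * hsin
    · rw [normSq_ofReal, normSq_ofReal]
      linarith
  · rintro ⟨g₁, g₂⟩ ⟨⟨x, hx, hg₁⟩, ⟨y, hy, hg₂⟩, w, hw, hg⟩
    dsimp only at hg₁ hg₂ hg
    have hxy : y = x * (x⁻¹ * y) := by
      rw [← mul_assoc, Matrix.mul_nonsing_inv _ (SU2_isUnit_det hx), one_mul]
    obtain ⟨p, q, hpq, hz⟩ := exists_suMat_of_mem (SU2_mul_mem (SU2_inv_mem hx) hy)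
    rw [hz] at hxy
    have ht := congrArg Matrix.trace hg
    rw [trace_conj hw, hg₁, hg₂, hxy, trace_conj_mul_conj hx, trace_tmat_mul_conj k _ _ hpq,
      tmat_eq k nu, trace_suMat, Complex.ofReal_inj] at ht
    have hq : normSq q = Real.sin θ ^ 2 := by
      have hne : 2 * Real.sin (Real.pi * lam / k) * Real.sin (Real.pi * mu / k) ≠ 0 := by
        positivity
      apply mul_right_cancel₀ hne
      linear_combination ht / 2 - hsin
    obtain ⟨e, f, he, hf, hef⟩ :=
      exists_suMat_eq_diag_mul_diag hc0 hs0 (by linarith : normSq p = Real.cos θ ^ 2) hq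
    have hed : suMat e 0 ∈ SU2 := suMat_mem (by simpa using he)
    have hfd : suMat f 0 ∈ SU2 := suMat_mem (by simpa using hf)
    refine ⟨x * suMat e 0, SU2_mul_mem hx hed, Prod.ext ?_ ?_⟩
    · rw [hg₁]
      exact (conj_eq_conj_mul_iff hx hed).mpr (suMat_mul_tmat_comm k lam e)
    · have hy' : y = (x * suMat e 0 * rotY θ) * suMat f 0 := by
        rw [hxy, hef, rotY_eq]
        simp only [mul_assoc]
      dsimp only
      rw [hg₂, hy']
      exact ((conj_eq_conj_mul_iff (SU2_mul_mem (SU2_mul_mem hx hed) ha) hfd).mpr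
        (suMat_mul_tmat_comm k mu f)).symm
  · intro h hh h' hh'
    constructor
    · intro heq
      obtain ⟨heq₁, heq₂⟩ := Prod.ext_iff.mp heq
      dsimp only at heq₁ heq₂
      have hw := SU2_mul_mem (SU2_inv_mem hh) hh'
      have hhw : h' = h * (h⁻¹ * h') := by
        rw [← mul_assoc, Matrix.mul_nonsing_inv _ (SU2_isUnit_det hh), one_mul]
      obtain ⟨p, q, hpq, hz⟩ := exists_suMat_of_mem hw
      rw [hz] at hw hhw
      have hq : q = 0 := by
        rw [hhw, conj_eq_conj_mul_iff hh hw] at heq₁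
        exact eq_zero_of_suMat_mul_tmat_comm hsl.ne' heq₁
      subst hq
      have hv : (rotY θ)⁻¹ * suMat p 0 * rotY θ ∈ SU2 :=
        SU2_mul_mem (SU2_mul_mem (SU2_inv_mem ha) hw) ha
      have hhv : h' * rotY θ = (h * rotY θ) * ((rotY θ)⁻¹ * suMat p 0 * rotY θ) := by
        calc h' * rotY θ = h * (rotY θ * (rotY θ)⁻¹) * suMat p 0 * rotY θ := by
              rw [Matrix.mul_nonsing_inv _ (SU2_isUnit_det ha), mul_one, ← hhw]
          _ = _ := by simp only [mul_assoc]
      rw [hhv, conj_eq_conj_mul_iff (SU2_mul_mem hh ha) hv, rotY_eq, suMat_inv, suMat_mul,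
        suMat_mul] at heq₂
      · have h0 := eq_zero_of_suMat_mul_tmat_comm hsm.ne' heq₂
        have him := congrArg im h0
        simp [-Complex.ofReal_cos, -Complex.ofReal_sin] at him
        have him : Real.sin θ * Real.cos θ * p.im = 0 := by linarith
        have hp0 : p.im = 0 := by simpa [hs0, hc0] using him
        rw [normSq_apply, hp0, normSq_zero] at hpq
        have hre : p.re = 1 ∨ p.re = -1 := mul_self_eq_one_iff.mp (by linarith)
        rcases hre with hre | hre
        · left
          rw [hhw, show p = 1 from Complex.ext hre hp0, suMat_one, mul_one]
        · right
          rw [hhw, show p = -1 from Complex.ext hre (by simpa using hp0), ← neg_zero,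
            ← suMat_neg, suMat_one, mul_neg, mul_one]
      · rw [normSq_ofReal, normSq_ofReal]
        linarith
    · rintro (rfl | rfl)
      · rfl
      · have hneg : (-1 : Matrix (Fin 2) (Fin 2) ℂ) ∈ SU2 := by
          rw [← suMat_one, suMat_neg]
          exact suMat_mem (by simp)
        rw [← mul_neg_one h]
        refine Prod.ext ((conj_eq_conj_mul_iff hh hneg).mpr (by simp)) ?_
        have := (conj_eq_conj_mul_iff (t := tmat k mu) (SU2_mul_mem hh ha) hneg).mpr (by simp)
        simpa using this
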